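/- (Claim 2 in the proof of the Avalanche Principle.) Let X be a metric space, b > 1 a real number such that X is strongly b-hyperbolic, and set δ = log 2 / log b. Let n ≥ 2, let x_0, x_1, …, x_n be points of X, and let ρ, σ > 0 be constants such that: (G) d(x_{i-1}, x_i) ≥ ρ for all i = 1, …, n; (A) ⟨x_{i-1}, x_{i+1}⟩_{x_i} ≤ σ for all i = 1, …, n−1; (P) 2σ < ρ − 2δ. Then for every k with 2 ≤ k ≤ n, |⟨x_0, x_k⟩_{x_{k-1}} − ⟨x_{k-2}, x_k⟩_{x_{k-1}}| ≤ (1/log b)·b^{2σ−ρ+2δ}, where log denotes the natural logarithm. -/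

import Mathlib

/-!
The proof is an induction on `j` showing `⟨x₀, x_{j+1}⟩_{x_j} ≤ σ + δ`. Given consecutive points
`q, p, z` and `o = x₀`, strong hyperbolicity at `p` says that `b ^ (-⟨o,z⟩_p)` and
`b ^ (-⟨q,z⟩_p)` differ by at most `b ^ (-⟨o,q⟩_p)`, and
`⟨o,q⟩_p = d(q,p) - ⟨o,p⟩_q ≥ ρ - σ - δ` by the inductive hypothesis. Since `b ^ δ = 2` and
`2σ < ρ - 2δ`, this difference is at most `b ^ (-σ) / 2 = b ^ (-σ-δ)`, so that
`b ^ (-⟨o,z⟩_p) ≥ b ^ (-σ-δ)`, which propagates the hypothesis (`gromovProd_step_le`). As both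
quantities are at least `b ^ (-σ-δ)`, where the logarithm is `b ^ (σ+δ)`-Lipschitz, taking
logarithms gives the required bound (`abs_gromovProd_sub_le`).
-/


open Real

/-- The Gromov product `⟨x, z⟩_w` of `x` and `z` with respect to basepoint `w`. -/
noncomputable def gromovProd {X : Type*} [MetricSpace X] (w x z : X) : ℝ :=
  (dist x w + dist w z - dist x z) / 2

/-- `X` is strongly `b`-hyperbolic if for every basepoint `w`, the map
`(x, y) ↦ b ^ (-⟨x,y⟩_w)` satisfies the triangle inequality. -/
def StronglyHyperbolic (X : Type*) [MetricSpace X] (b : ℝ) : Prop :=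
  ∀ w x y z : X,
    b ^ (-(gromovProd w x z)) ≤ b ^ (-(gromovProd w x y)) + b ^ (-(gromovProd w y z))

lemma gromovProd_comm {X : Type*} [MetricSpace X] (w x z : X) :
    gromovProd w x z = gromovProd w z x := by
  unfold gromovProd
  rw [dist_comm x w, dist_comm w z, dist_comm x z]
  ring

/-- The Gromov products of `o` with the two endpoints `p`, `q` of a segment, each based at the other
endpoint, add up to the length of the segment. -/
lemma gromovProd_add_gromovProd {X : Type*} [MetricSpace X] (o p q : X) :
    gromovProd p o q + gromovProd q o p = dist q p := by
  unfold gromovProd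
  rw [dist_comm p q]
  ring

lemma log_sub_log_le {M u v w : ℝ} (hM : 0 < M) (hu : M ≤ u) (hv : 0 < v) (hw : 0 ≤ w)
    (h : v ≤ w + u) : Real.log v - Real.log u ≤ w / M := by
  have hu0 : 0 < u := hM.trans_le hu
  rw [← Real.log_div hv.ne' hu0.ne']
  calc Real.log (v / u) ≤ v / u - 1 := Real.log_le_sub_one_of_pos (div_pos hv hu0)
    _ = (v - u) / u := by field_simp
    _ ≤ w / u := by gcongr; linarith
    _ ≤ w / M := by gcongr

lemma rpow_neg_gromovProd_le {X : Type*} [MetricSpace X] {b δ ρ σ : ℝ} (hb : 1 < b)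
    {o q p : X} (hG : ρ ≤ dist q p) (hI : gromovProd q o p ≤ σ + δ) :
    b ^ (-(gromovProd p o q)) ≤ b ^ (σ + δ - ρ) := by
  have h := gromovProd_add_gromovProd o p q
  exact Real.rpow_le_rpow_of_exponent_le hb.le (by linarith)

/-- The inductive step: `⟨o,p⟩_q ≤ σ + δ` passes from the pair `q, p` to the next pair `p, z`. -/
lemma gromovProd_step_le {X : Type*} [MetricSpace X] {b δ ρ σ : ℝ} (hb : 1 < b)
    (hX : StronglyHyperbolic X b) (hδ : b ^ δ = 2) (hP : 2 * σ < ρ - 2 * δ)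
    {o q p z : X} (hG : ρ ≤ dist q p) (hA : gromovProd p q z ≤ σ)
    (hI : gromovProd q o p ≤ σ + δ) : gromovProd p o z ≤ σ + δ := by
  have hb0 : 0 < b := one_pos.trans hb
  have h1 := hX p q o z
  rw [gromovProd_comm p q o] at h1
  have h2 := rpow_neg_gromovProd_le hb hG hI
  have h3 : b ^ (σ + δ - ρ) ≤ b ^ (-(σ + δ)) :=
    Real.rpow_le_rpow_of_exponent_le hb.le (by linarith)
  have h4 : b ^ (-σ) ≤ b ^ (-(gromovProd p q z)) :=
    Real.rpow_le_rpow_of_exponent_le hb.le (by linarith)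
  have h5 : b ^ (-σ) = b ^ (-(σ + δ)) * 2 := by
    rw [← hδ, ← Real.rpow_add hb0]
    congr 1
    ring
  have h6 : b ^ (-(σ + δ)) ≤ b ^ (-(gromovProd p o z)) := by linarith
  have h7 := (Real.rpow_le_rpow_left_iff hb).1 h6
  linarith

/-- Replacing `q` by the far point `o` changes the Gromov product with `z` at `p` only slightly. -/
lemma abs_gromovProd_sub_le {X : Type*} [MetricSpace X] {b δ ρ σ : ℝ} (hb : 1 < b)
    (hX : StronglyHyperbolic X b) (hδ0 : 0 ≤ δ) (hδ : b ^ δ = 2) (hP : 2 * σ < ρ - 2 * δ)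
    {o q p z : X} (hG : ρ ≤ dist q p) (hA : gromovProd p q z ≤ σ)
    (hI : gromovProd q o p ≤ σ + δ) :
    |gromovProd p o z - gromovProd p q z| ≤ (1 / Real.log b) * b ^ (2 * σ - ρ + 2 * δ) := by
  have hb0 : 0 < b := one_pos.trans hb
  have hL : 0 < Real.log b := Real.log_pos hb
  have hS := gromovProd_step_le hb hX hδ hP hG hA hI
  have h2 := rpow_neg_gromovProd_le hb hG hI
  have h1 := hX p q o z
  rw [gromovProd_comm p q o] at h1
  have h3 := hX p o q z
  have hM : 0 < b ^ (-(σ + δ)) := Real.rpow_pos_of_pos hb0 _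
  have hu : b ^ (-(σ + δ)) ≤ b ^ (-(gromovProd p o z)) :=
    Real.rpow_le_rpow_of_exponent_le hb.le (by linarith)
  have hv : b ^ (-(σ + δ)) ≤ b ^ (-(gromovProd p q z)) :=
    Real.rpow_le_rpow_of_exponent_le hb.le (by linarith)
  have hw : 0 ≤ b ^ (σ + δ - ρ) := (Real.rpow_pos_of_pos hb0 _).le
  have e1 := log_sub_log_le hM hu (hM.trans_le hv) hw (by linarith)
  have e2 := log_sub_log_le hM hv (hM.trans_le hu) hw (by linarith)
  rw [← Real.rpow_sub hb0, Real.log_rpow hb0, Real.log_rpow hb0,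
    show σ + δ - ρ - -(σ + δ) = 2 * σ - ρ + 2 * δ by ring] at e1 e2
  rw [one_div_mul_eq_div, abs_le, neg_le, le_div_iff₀ hL, le_div_iff₀ hL]
  constructor <;> linarith

theorem avalanche_claim2 {X : Type*} [MetricSpace X] (b : ℝ) (hb : 1 < b)
    (hX : StronglyHyperbolic X b) (δ : ℝ) (hδ : δ = Real.log 2 / Real.log b)
    (n : ℕ) (hn : 2 ≤ n) (x : ℕ → X) (ρ σ : ℝ) (hρ : 0 < ρ) (hσ : 0 < σ)
    (hG : ∀ i, 1 ≤ i → i ≤ n → ρ ≤ dist (x (i - 1)) (x i))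
    (hA : ∀ i, 1 ≤ i → i ≤ n - 1 → gromovProd (x i) (x (i - 1)) (x (i + 1)) ≤ σ)
    (hP : 2 * σ < ρ - 2 * δ) :
    ∀ k, 2 ≤ k → k ≤ n →
      |gromovProd (x (k - 1)) (x 0) (x k) - gromovProd (x (k - 1)) (x (k - 2)) (x k)|
        ≤ (1 / Real.log b) * b ^ (2 * σ - ρ + 2 * δ) := by
  have hb0 : 0 < b := one_pos.trans hb
  have hL : 0 < Real.log b := Real.log_pos hb
  have hδ0 : 0 ≤ δ := hδ ▸ (div_pos (Real.log_pos one_lt_two) hL).le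
  have hδ2 : b ^ δ = 2 := by
    rw [Real.rpow_def_of_pos hb0, hδ, mul_div_cancel₀ _ hL.ne', Real.exp_log two_pos]
  have key : ∀ j, j + 1 ≤ n → gromovProd (x j) (x 0) (x (j + 1)) ≤ σ + δ := by
    intro j
    induction j with
    | zero =>
      intro _
      have : gromovProd (x 0) (x 0) (x (0 + 1)) = 0 := by simp [gromovProd]
      linarith
    | succ j ih =>
      intro hj
      exact gromovProd_step_le hb hX hδ2 hP (hG (j + 1) (by omega) (by omega))
        (hA (j + 1) (by omega) (by omega)) (ih (by omega))
  intro k hk hkn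
  obtain ⟨j, rfl⟩ := Nat.exists_eq_add_of_le' hk
  exact abs_gromovProd_sub_le hb hX hδ0 hδ2 hP (hG (j + 1) (by omega) (by omega))
    (hA (j + 1) (by omega) (by omega)) (key j (by omega))
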